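/- arXiv:2104.10165 — 5 statements merged into one kernel-verified Lean document; each statement's English description precedes it below -/
import Mathlib

section
/- The subgroup G of GL(2,ℂ) generated by the matrices {i, w, d} has order 48. -/
open Matrix Complex
open scoped MatrixGroups

noncomputable section

def iM : Matrix (Fin 2) (Fin 2) ℂ := !![0, 1; -1, 0]
def jM : Matrix (Fin 2) (Fin 2) ℂ := !![0, Complex.I; Complex.I, 0]
def kM : Matrix (Fin 2) (Fin 2) ℂ := !![Complex.I, 0; 0, -Complex.I]
def wM : Matrix (Fin 2) (Fin 2) ℂ :=
  (1 / 2 : ℂ) • !![-1 + Complex.I, 1 + Complex.I; -1 + Complex.I, -1 - Complex.I]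
def cM : Matrix (Fin 2) (Fin 2) ℂ :=
  ((Real.sqrt 2 : ℂ))⁻¹ • !![-Complex.I, Complex.I; Complex.I, Complex.I]
def dM : Matrix (Fin 2) (Fin 2) ℂ :=
  ((Real.sqrt 2 : ℂ))⁻¹ • !![-1, 1; 1, 1]

def G : Subgroup (GL (Fin 2) ℂ) :=
  Subgroup.closure {g : GL (Fin 2) ℂ |
    (g : Matrix (Fin 2) (Fin 2) ℂ) = iM ∨
    (g : Matrix (Fin 2) (Fin 2) ℂ) = wM ∨
    (g : Matrix (Fin 2) (Fin 2) ℂ) = dM}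

abbrev V4 := ℤ × ℤ × ℤ × ℤ

def QM (v : V4) : Matrix (Fin 2) (Fin 2) ℂ :=
  !![((v.1 : ℂ) + v.2.2.2 * Complex.I) / 2, ((v.2.1 : ℂ) + v.2.2.1 * Complex.I) / 2;
     (-(v.2.1 : ℂ) + v.2.2.1 * Complex.I) / 2, ((v.1 : ℂ) - v.2.2.2 * Complex.I) / 2]

def Li (v : V4) : V4 := (-v.2.1, v.1, -v.2.2.2, v.2.2.1)
def Lw (v : V4) : V4 :=
  ((-v.1 - v.2.1 - v.2.2.1 - v.2.2.2) / 2, (v.1 - v.2.1 - v.2.2.1 + v.2.2.2) / 2,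
   (v.1 + v.2.1 - v.2.2.1 - v.2.2.2) / 2, (v.1 - v.2.1 + v.2.2.1 - v.2.2.2) / 2)
def Ld (v : V4) : V4 := (v.1, -v.2.1, -v.2.2.2, -v.2.2.1)

def S0 : Finset ℤ := {-2, -1, 0, 1, 2}
/-- Doubled coordinates of the 24 Hurwitz units. -/
def S : Finset V4 := (S0 ×ˢ S0 ×ˢ S0 ×ˢ S0).filter
  (fun v => v.1 * v.1 + v.2.1 * v.2.1 + v.2.2.1 * v.2.2.1 + v.2.2.2 * v.2.2.2 = 4)

lemma S_card : S.card = 24 := by decide +kernel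
lemma S_Li : ∀ v ∈ S, Li v ∈ S := by decide +kernel
lemma S_Ld : ∀ v ∈ S, Ld v ∈ S := by decide +kernel
lemma S_Lw : ∀ v ∈ S, Lw v ∈ S := by decide +kernel
lemma S_par : ∀ v ∈ S, (v.1 + v.2.1 + v.2.2.1 + v.2.2.2) % 2 = 0 := by decide +kernel
lemma S_norm (v : V4) (h : v ∈ S) :
    v.1 * v.1 + v.2.1 * v.2.1 + v.2.2.1 * v.2.2.1 + v.2.2.2 * v.2.2.2 = 4 :=
  (Finset.mem_filter.1 h).2
lemma S_one : ((2, 0, 0, 0) : V4) ∈ S := by decide +kernel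
lemma S_gen : ∀ v ∈ S, ∃ a ∈ Finset.range 4, ∃ b ∈ Finset.range 3, ∃ c ∈ Finset.range 4,
    ∃ d ∈ Finset.range 3, v = Li^[a] (Lw^[b] (Li^[c] (Lw^[d] (2, 0, 0, 0)))) := by
  decide +kernel

lemma sq2 : ((Real.sqrt 2 : ℂ))⁻¹ * ((Real.sqrt 2 : ℂ))⁻¹ = 1 / 2 := by
  rw [← mul_inv, ← Complex.ofReal_mul, Real.mul_self_sqrt (by norm_num)]; norm_num

lemma QM_one : QM (2, 0, 0, 0) = 1 := by
  ext i j; fin_cases i <;> fin_cases j <;> simp [QM]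

lemma iM_mul (v : V4) : iM * QM v = QM (Li v) := by
  ext i j; fin_cases i <;> fin_cases j <;> simp [QM, Li, iM, Matrix.mul_apply] <;> ring

lemma wM_mul (v : V4) (hv : v ∈ S) : wM * QM v = QM (Lw v) := by
  have hp := S_par v hv
  obtain ⟨a, b, c, d⟩ := v
  simp only at hp
  obtain ⟨p, q, r, s, h⟩ : ∃ p q r s : ℤ, Lw (a, b, c, d) = (p, q, r, s) := ⟨_, _, _, _, rfl⟩
  rw [h]
  simp only [Lw, Prod.mk.injEq] at h
  have h1 : 2 * p = -a - b - c - d := by omega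
  have h2 : 2 * q = a - b - c + d := by omega
  have h3 : 2 * r = a + b - c - d := by omega
  have h4 : 2 * s = a - b + c - d := by omega
  have c1 : (p : ℂ) = (-a - b - c - d) / 2 := by
    rw [eq_div_iff two_ne_zero, mul_comm]; exact_mod_cast h1
  have c2 : (q : ℂ) = (a - b - c + d) / 2 := by
    rw [eq_div_iff two_ne_zero, mul_comm]; exact_mod_cast h2
  have c3 : (r : ℂ) = (a + b - c - d) / 2 := by
    rw [eq_div_iff two_ne_zero, mul_comm]; exact_mod_cast h3
  have c4 : (s : ℂ) = (a - b + c - d) / 2 := by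
    rw [eq_div_iff two_ne_zero, mul_comm]; exact_mod_cast h4
  ext i j; fin_cases i <;> fin_cases j <;>
    simp [QM, wM, Matrix.mul_apply, c1, c2, c3, c4] <;>
    ring_nf <;> simp only [Complex.I_sq] <;> ring

lemma dM_sq : dM * dM = 1 := by
  have h := sq2
  simp only [dM, Matrix.smul_mul, Matrix.mul_smul, smul_smul, h]
  ext i j; fin_cases i <;> fin_cases j <;> simp [Matrix.mul_apply] <;> norm_num

lemma dM_mul (v : V4) : dM * QM v = QM (Ld v) * dM := by
  simp only [dM, Matrix.smul_mul, Matrix.mul_smul]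
  congr 1
  ext i j; fin_cases i <;> fin_cases j <;> simp [QM, Ld, Matrix.mul_apply] <;> ring

lemma QM_inj : Function.Injective QM := by
  rintro ⟨a, b, c, d⟩ ⟨a', b', c', d'⟩ h
  have h1 := congrFun (congrFun h 0) 0
  have h2 := congrFun (congrFun h 0) 1
  simp [QM, Complex.ext_iff] at h1 h2
  simp [h1, h2]

lemma QM_det (v : V4) (hv : v ∈ S) : (QM v).det = 1 := by
  have h : ((v.1 * v.1 + v.2.1 * v.2.1 + v.2.2.1 * v.2.2.1 + v.2.2.2 * v.2.2.2 : ℤ) : ℂ) = 4 := by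
    rw [S_norm v hv]; norm_num
  push_cast at h
  simp only [QM, Matrix.det_fin_two_of]
  linear_combination h / 4 - ((v.2.2.2 : ℂ)^2 + (v.2.2.1 : ℂ)^2) / 4 * Complex.I_sq

lemma dM_det : dM.det = -1 := by
  simp only [dM, Matrix.det_smul, Matrix.det_fin_two_of, Fintype.card_fin, pow_two, sq2]
  norm_num

def FM (x : Bool × V4) : Matrix (Fin 2) (Fin 2) ℂ := QM x.2 * (if x.1 then dM else 1)

def T : Finset (Bool × V4) := Finset.univ ×ˢ S

lemma T_card : T.card = 48 := by simp [T, S_card]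

lemma mem_T (x : Bool × V4) : x ∈ T ↔ x.2 ∈ S := by simp [T]

lemma FM_inj : Set.InjOn FM T := by
  rintro ⟨e, v⟩ hv ⟨e', u⟩ hu h
  have hv1 : v ∈ S := by simpa [mem_T] using hv
  have hu1 : u ∈ S := by simpa [mem_T] using hu
  have hd := congrArg Matrix.det h
  have hr := congrArg (· * dM) h
  cases e <;> cases e' <;>
    simp [FM, Matrix.det_mul, QM_det v hv1, QM_det u hu1, dM_det, Matrix.mul_assoc, dM_sq] at h hd hr ⊢
  · exact QM_inj h
  · norm_num [Complex.ext_iff] at hd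
  · norm_num [Complex.ext_iff] at hd
  · exact QM_inj hr

def X : Set (Matrix (Fin 2) (Fin 2) ℂ) := FM '' T

lemma X_i (m) (hm : m ∈ X) : iM * m ∈ X := by
  obtain ⟨⟨e, v⟩, hv, rfl⟩ := hm
  have hv : v ∈ S := by simpa [mem_T] using hv
  refine ⟨(e, Li v), by simpa [mem_T] using S_Li v hv, ?_⟩
  simp only [FM, ← Matrix.mul_assoc, iM_mul]

lemma X_w (m) (hm : m ∈ X) : wM * m ∈ X := by
  obtain ⟨⟨e, v⟩, hv, rfl⟩ := hm
  have hv : v ∈ S := by simpa [mem_T] using hv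
  refine ⟨(e, Lw v), by simpa [mem_T] using S_Lw v hv, ?_⟩
  simp only [FM, ← Matrix.mul_assoc, wM_mul v hv]

lemma X_d (m) (hm : m ∈ X) : dM * m ∈ X := by
  obtain ⟨⟨e, v⟩, hv, rfl⟩ := hm
  have hv : v ∈ S := by simpa [mem_T] using hv
  refine ⟨(!e, Ld v), by simpa [mem_T] using S_Ld v hv, ?_⟩
  simp only [FM, ← Matrix.mul_assoc, dM_mul v]
  cases e <;> simp [Matrix.mul_assoc, dM_sq]

lemma iM_pow : iM * (iM * (iM * iM)) = 1 := by
  have h : iM * (iM * (iM * (iM * QM (2, 0, 0, 0)))) = QM (2, 0, 0, 0) := by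
    simp only [iM_mul]; rfl
  simpa [QM_one] using h

lemma wM_pow : wM * (wM * wM) = 1 := by
  have h : wM * (wM * (wM * QM (2, 0, 0, 0))) = QM (2, 0, 0, 0) := by
    rw [wM_mul _ S_one, wM_mul _ (S_Lw _ S_one), wM_mul _ (S_Lw _ (S_Lw _ S_one))]; rfl
  simpa [QM_one] using h

def gi : GL (Fin 2) ℂ := ⟨iM, iM * (iM * iM), iM_pow, by simpa [Matrix.mul_assoc] using iM_pow⟩
def gw : GL (Fin 2) ℂ := ⟨wM, wM * wM, wM_pow, by simpa [Matrix.mul_assoc] using wM_pow⟩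
def gd : GL (Fin 2) ℂ := ⟨dM, dM, dM_sq, dM_sq⟩

lemma gi_mem : gi ∈ G := Subgroup.subset_closure (Or.inl rfl)
lemma gw_mem : gw ∈ G := Subgroup.subset_closure (Or.inr (Or.inl rfl))
lemma gd_mem : gd ∈ G := Subgroup.subset_closure (Or.inr (Or.inr rfl))

lemma G_sub (g : GL (Fin 2) ℂ) (hg : g ∈ G) : (g : Matrix (Fin 2) (Fin 2) ℂ) ∈ X := by
  have key : ∀ x : GL (Fin 2) ℂ, ((x : Matrix (Fin 2) (Fin 2) ℂ) = iM ∨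
      (x : Matrix (Fin 2) (Fin 2) ℂ) = wM ∨ (x : Matrix (Fin 2) (Fin 2) ℂ) = dM) →
      x = gi ∨ x = gw ∨ x = gd := by
    rintro x (h | h | h)
    · exact Or.inl (Units.ext h)
    · exact Or.inr (Or.inl (Units.ext h))
    · exact Or.inr (Or.inr (Units.ext h))
  unfold G at hg
  induction hg using Subgroup.closure_induction_left with
  | one => exact ⟨(false, (2, 0, 0, 0)), by simpa [mem_T] using S_one, by simp [FM, QM_one]⟩
  | mul_left x hx y hy ih =>
    rcases key x hx with rfl | rfl | rfl
    · exact X_i _ ih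
    · exact X_w _ ih
    · exact X_d _ ih
  | inv_mul_cancel x hx y hy ih =>
    rcases key x hx with rfl | rfl | rfl
    · have := X_i _ (X_i _ (X_i _ ih))
      rw [← Matrix.mul_assoc, ← Matrix.mul_assoc, Matrix.mul_assoc iM iM iM] at this
      exact this
    · have := X_w _ (X_w _ ih)
      rw [← Matrix.mul_assoc] at this
      exact this
    · exact X_d _ ih

def Good (v : V4) : Prop := v ∈ S ∧ ∃ g ∈ G, (g : Matrix (Fin 2) (Fin 2) ℂ) = QM v

lemma good_i (v : V4) (h : Good v) : Good (Li v) := by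
  obtain ⟨hv, g, hg, e⟩ := h
  exact ⟨S_Li v hv, gi * g, G.mul_mem gi_mem hg, by rw [← iM_mul, ← e]; rfl⟩

lemma good_w (v : V4) (h : Good v) : Good (Lw v) := by
  obtain ⟨hv, g, hg, e⟩ := h
  exact ⟨S_Lw v hv, gw * g, G.mul_mem gw_mem hg, by rw [← wM_mul v hv, ← e]; rfl⟩

lemma good_iter (f : V4 → V4) (hf : ∀ v, Good v → Good (f v)) (n : ℕ) (v : V4) (h : Good v) :
    Good (f^[n] v) := by
  induction n with
  | zero => exact h
  | succ n ih => rw [Function.iterate_succ_apply']; exact hf _ ih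

lemma good_S (v : V4) (hv : v ∈ S) : Good v := by
  obtain ⟨a, -, b, -, c, -, d, -, rfl⟩ := S_gen v hv
  exact good_iter _ good_i _ _ (good_iter _ good_w _ _ (good_iter _ good_i _ _
    (good_iter _ good_w _ _ ⟨S_one, 1, G.one_mem, by simp [QM_one]⟩)))

lemma G_image : (fun g : GL (Fin 2) ℂ => (g : Matrix (Fin 2) (Fin 2) ℂ)) '' (G : Set _) = X := by
  ext m
  constructor
  · rintro ⟨g, hg, rfl⟩
    exact G_sub g hg
  · rintro ⟨⟨e, v⟩, hv, rfl⟩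
    have hv : v ∈ S := by simpa [mem_T] using hv
    obtain ⟨-, g, hg, h⟩ := good_S v hv
    cases e
    · exact ⟨g, hg, by simp [FM, h]⟩
    · refine ⟨g * gd, G.mul_mem hg gd_mem, ?_⟩
      simp only [FM, ← h]
      rfl

theorem binary_octahedral_group_order : Nat.card G = 48 := by
  have h1 : (G : Set (GL (Fin 2) ℂ)).ncard = 48 := by
    rw [← Set.ncard_image_of_injective (G : Set (GL (Fin 2) ℂ))
      (f := fun g : GL (Fin 2) ℂ => (g : Matrix (Fin 2) (Fin 2) ℂ)) (fun a b h => Units.ext h),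
      G_image, X, FM_inj.ncard_image, Set.ncard_coe_finset, T_card]
  exact h1
end
end

section
/- The center of the group G consists exactly of the two elements 1 and -1 (the identity matrix and its negative), and the quotient of G by its center is isomorphic to the symmetric group on 4 letters. -/
open Matrix Complex
open scoped MatrixGroups

noncomputable section

/-- The traceless matrix `x i + y j + z k`. -/
def vQ (x y z : ℂ) : Matrix (Fin 2) (Fin 2) ℂ :=
  !![z * Complex.I, x + y * Complex.I; -x + y * Complex.I, -(z * Complex.I)]

/-- The four diagonals of the cube. -/
def diagV : Fin 4 → Matrix (Fin 2) (Fin 2) ℂ :=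
  ![vQ 1 1 1, vQ 1 (-1) (-1), vQ (-1) 1 (-1), vQ (-1) (-1) 1]

/-- `g` permutes the four diagonals (up to sign) by `σ`, with determinant `sign σ`. -/
def RelP (g : GL (Fin 2) ℂ) (σ : Equiv.Perm (Fin 4)) : Prop :=
  (∀ a, g.val * diagV a = diagV (σ a) * g.val ∨ g.val * diagV a = -(diagV (σ a) * g.val)) ∧
  g.val.det = ((Equiv.Perm.sign σ : ℤ) : ℂ)

lemma RelP.one : RelP 1 1 := by
  constructor
  · intro a; left; simp
  · simp

lemma RelP.mul {g h : GL (Fin 2) ℂ} {σ τ : Equiv.Perm (Fin 4)} (hg : RelP g σ) (hh : RelP h τ) :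
    RelP (g * h) (σ * τ) := by
  constructor
  · intro a
    have e : ∀ X : Matrix (Fin 2) (Fin 2) ℂ, g.val * (X * h.val) = (g.val * X) * h.val :=
      fun X => (mul_assoc _ _ _).symm
    rw [Units.val_mul, Equiv.Perm.mul_apply, mul_assoc, ← mul_assoc (diagV _)]
    rcases hh.1 a with h1 | h1 <;> rcases hg.1 (τ a) with h2 | h2 <;>
      rw [h1] <;> simp only [mul_neg, e, h2, neg_mul, neg_neg, true_or, or_true]
  · simp only [Units.val_mul, Matrix.det_mul, hg.2, hh.2]
    simp

lemma RelP.inv {g : GL (Fin 2) ℂ} {σ : Equiv.Perm (Fin 4)} (hg : RelP g σ) :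
    RelP g⁻¹ σ⁻¹ := by
  have h1 : g.val * g⁻¹.val = 1 := g.mul_inv
  have h2 : g⁻¹.val * g.val = 1 := g.inv_mul
  constructor
  · intro a
    have key := hg.1 (σ⁻¹ a)
    rw [show σ (σ⁻¹ a) = a from by simp] at key
    rcases key with h | h
    · left
      calc g⁻¹.val * diagV a = g⁻¹.val * (diagV a * g.val) * g⁻¹.val := by
            rw [mul_assoc, mul_assoc, h1, mul_one]
        _ = _ := by rw [← h, ← mul_assoc, h2, one_mul]
    · right
      have h' : diagV a * g.val = -(g.val * diagV (σ⁻¹ a)) := by rw [h, neg_neg]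
      calc g⁻¹.val * diagV a = g⁻¹.val * (diagV a * g.val) * g⁻¹.val := by
            rw [mul_assoc, mul_assoc, h1, mul_one]
        _ = _ := by rw [h', mul_neg, ← mul_assoc, h2, one_mul, neg_mul]
  · have h3 : g.val.det * g⁻¹.val.det = 1 := by rw [← Matrix.det_mul, h1, Matrix.det_one]
    rw [hg.2] at h3
    rw [Equiv.Perm.sign_inv]
    rcases Int.units_eq_one_or (Equiv.Perm.sign σ) with hs | hs <;> rw [hs] at h3 ⊢ <;>
      simp at h3 ⊢
    · exact h3
    · linear_combination -h3

lemma diagV_inj (a b : Fin 4) (h : diagV a = diagV b ∨ diagV a = -diagV b) : a = b := by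
  by_contra hne
  have hI := Complex.I_mul_I
  have hr : ∀ x y z x' y' z' : ℂ, vQ x y z = vQ x' y' z' → x = x' ∧ y = y' ∧ z = z' := by
    intro x y z x' y' z' h
    have h00 := congrFun (congrFun h 0) 0
    have h01 := congrFun (congrFun h 0) 1
    have h10 := congrFun (congrFun h 1) 0
    simp [vQ] at h00 h01 h10
    refine ⟨?_, ?_, h00⟩
    · linear_combination (h01 - h10) / 2
    · linear_combination (-Complex.I / 2) * (h01 + h10) + (y - y') * hI
  have hn : ∀ x y z : ℂ, -vQ x y z = vQ (-x) (-y) (-z) := by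
    intro x y z
    ext i j; fin_cases i <;> fin_cases j <;> simp [vQ] <;> ring
  fin_cases a <;> fin_cases b <;> first | exact hne rfl | skip
  all_goals
    simp only [diagV] at h
    simp [hn] at h
    rcases h with h | h <;> have h' := hr _ _ _ _ _ _ h <;> norm_num at h'

lemma RelP.unique {g : GL (Fin 2) ℂ} {σ τ : Equiv.Perm (Fin 4)} (hg : RelP g σ) (hh : RelP g τ) :
    σ = τ := by
  ext1 a
  apply diagV_inj
  have h1 : g.val * g⁻¹.val = 1 := g.mul_inv
  have canc : ∀ X Y : Matrix (Fin 2) (Fin 2) ℂ, X * g.val = Y * g.val → X = Y := by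
    intro X Y h
    have := congrArg (· * g⁻¹.val) h
    simpa only [mul_assoc, h1, mul_one] using this
  rcases hg.1 a with h | h <;> rcases hh.1 a with h' | h' <;> rw [h] at h'
  · left; exact canc _ _ h'
  · right; apply canc; rw [h', neg_mul]
  · right; apply canc; rw [neg_mul, ← h', neg_neg]
  · left; apply canc; exact neg_injective h'

lemma RelP.ker {g : GL (Fin 2) ℂ} (hg : RelP g 1) : g.val = 1 ∨ g.val = -1 := by
  obtain ⟨h, hd⟩ := hg
  have hI := Complex.I_mul_I
  generalize g.val = M at h hd
  have e : M = !![M 0 0, M 0 1; M 1 0, M 1 1] := Matrix.eta_fin_two M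
  generalize M 0 0 = a at e
  generalize M 0 1 = b at e
  generalize M 1 0 = c at e
  generalize M 1 1 = d at e
  subst e
  have key : b = 0 ∧ c = 0 ∧ a = d := by
    have h0 := h 0
    have h1 := h 1
    have h2 := h 2
    have h3 := h 3
    clear h
    simp [diagV, vQ, Matrix.det_fin_two] at h0 h1 h2 h3 hd
    generalize Complex.I = I at *
    rcases h0 with ⟨⟨_, _⟩, _, _⟩ | ⟨⟨_, _⟩, _, _⟩ <;>
    rcases h1 with ⟨⟨_, _⟩, _, _⟩ | ⟨⟨_, _⟩, _, _⟩ <;>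
    rcases h2 with ⟨⟨_, _⟩, _, _⟩ | ⟨⟨_, _⟩, _, _⟩ <;>
    rcases h3 with ⟨⟨_, _⟩, _, _⟩ | ⟨⟨_, _⟩, _, _⟩ <;>
    grind
  obtain ⟨rfl, rfl, rfl⟩ := key
  simp [Matrix.det_fin_two] at hd
  rcases mul_self_eq_one_iff.1 hd with rfl | rfl
  · left; ext i j; fin_cases i <;> fin_cases j <;> simp
  · right; ext i j; fin_cases i <;> fin_cases j <;> simp

def permI : Equiv.Perm (Fin 4) := Equiv.swap 0 1 * Equiv.swap 2 3
/-- 1 to 3 to 2 to 1 -/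
def permW : Equiv.Perm (Fin 4) := Equiv.swap 1 2 * Equiv.swap 1 3
def permD : Equiv.Perm (Fin 4) := Equiv.swap 2 3

lemma relI {g : GL (Fin 2) ℂ} (h : g.val = iM) : RelP g permI := by
  constructor
  · intro a
    rw [h]
    have e0 : permI 0 = 1 := by decide
    have e1 : permI 1 = 0 := by decide
    have e2 : permI 2 = 3 := by decide
    have e3 : permI 3 = 2 := by decide
    fin_cases a <;> simp [e0, e1, e2, e3, diagV, vQ, iM] <;> left <;>
      constructor <;> ring
  · have : Equiv.Perm.sign permI = 1 := by decide
    rw [h, this]; simp [iM]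

lemma relD {g : GL (Fin 2) ℂ} (h : g.val = dM) : RelP g permD := by
  constructor
  · intro a
    rw [h]
    have e0 : permD 0 = 0 := by decide
    have e1 : permD 1 = 1 := by decide
    have e2 : permD 2 = 3 := by decide
    have e3 : permD 3 = 2 := by decide
    unfold dM
    rw [smul_mul_assoc, mul_smul_comm, ← smul_neg]
    right
    congr 1
    fin_cases a <;> simp [e0, e1, e2, e3, diagV, vQ] <;> ring_nf <;> simp
  · have : Equiv.Perm.sign permD = -1 := by decide
    have h2 : ((Real.sqrt 2 : ℂ)) * (Real.sqrt 2 : ℂ) = 2 := by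
      rw [← Complex.ofReal_mul, Real.mul_self_sqrt (by norm_num)]; simp
    have h3 : ((Real.sqrt 2 : ℂ))⁻¹ * (Real.sqrt 2 : ℂ)⁻¹ = 1 / 2 := by
      rw [← mul_inv, h2]; norm_num
    rw [h, this]; simp [dM, Matrix.det_fin_two]
    linear_combination -2 * h3

lemma relW {g : GL (Fin 2) ℂ} (h : g.val = wM) : RelP g permW := by
  have hI := Complex.I_mul_I
  constructor
  · intro a
    rw [h]
    have e0 : permW 0 = 0 := by decide
    have e1 : permW 1 = 3 := by decide
    have e2 : permW 2 = 1 := by decide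
    have e3 : permW 3 = 2 := by decide
    unfold wM
    rw [smul_mul_assoc, mul_smul_comm]
    left
    congr 1
    fin_cases a <;> simp [e0, e1, e2, e3, diagV, vQ] <;> ring_nf <;> simp <;> grind
  · have : Equiv.Perm.sign permW = 1 := by decide
    rw [h, this]; simp [wM, Matrix.det_fin_two]
    linear_combination (-1/2) * hI

lemma exists_rel (g : G) : ∃ σ, RelP g.1 σ := by
  obtain ⟨g, hg⟩ := g
  show ∃ σ, RelP g σ
  unfold G at hg
  induction hg using Subgroup.closure_induction with
  | mem x hx =>
    rcases hx with h | h | h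
    · exact ⟨_, relI h⟩
    · exact ⟨_, relW h⟩
    · exact ⟨_, relD h⟩
  | one => exact ⟨_, RelP.one⟩
  | mul x y _ _ hx hy =>
    obtain ⟨σ, hσ⟩ := hx
    obtain ⟨τ, hτ⟩ := hy
    exact ⟨_, hσ.mul hτ⟩
  | inv x _ hx =>
    obtain ⟨σ, hσ⟩ := hx
    exact ⟨_, hσ.inv⟩

def phi : G →* Equiv.Perm (Fin 4) :=
  MonoidHom.mk' (fun g => (exists_rel g).choose) (fun g h =>
    (exists_rel (g * h)).choose_spec.unique
      ((exists_rel g).choose_spec.mul (exists_rel h).choose_spec))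

lemma phi_spec (g : G) : RelP g.1 (phi g) := (exists_rel g).choose_spec

lemma exists_gl (M : Matrix (Fin 2) (Fin 2) ℂ) (h : M.det ≠ 0) :
    ∃ g : GL (Fin 2) ℂ, g.val = M :=
  ⟨Matrix.GeneralLinearGroup.mkOfDetNeZero M h, rfl⟩

lemma perm_words : ∀ σ : Equiv.Perm (Fin 4), ∃ a : Fin 2, ∃ b : Fin 3, ∃ c e : Fin 2,
    σ = permD ^ (a : ℕ) * permW ^ (b : ℕ) * permI ^ (c : ℕ) *
      (permW * permI * permW⁻¹) ^ (e : ℕ) := by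
  decide

lemma perm_center : ∀ σ : Equiv.Perm (Fin 4), (∀ τ, τ * σ = σ * τ) → σ = 1 := by
  decide

lemma phi_surj : Function.Surjective phi := by
  have hI : permI ∈ phi.range := by
    obtain ⟨g, hg⟩ := exists_gl iM (by simp [iM])
    exact ⟨⟨g, Subgroup.subset_closure (Or.inl hg)⟩, (phi_spec _).unique (relI hg)⟩
  have hW : permW ∈ phi.range := by
    obtain ⟨g, hg⟩ := exists_gl wM (by
      have hI := Complex.I_mul_I
      have : wM.det = 1 := by
        simp [wM, Matrix.det_fin_two]
        linear_combination (-1/2) * hI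
      rw [this]; exact one_ne_zero)
    exact ⟨⟨g, Subgroup.subset_closure (Or.inr (Or.inl hg))⟩, (phi_spec _).unique (relW hg)⟩
  have hD : permD ∈ phi.range := by
    obtain ⟨g, hg⟩ := exists_gl dM (by
      simp [dM]; ring_nf; simp)
    exact ⟨⟨g, Subgroup.subset_closure (Or.inr (Or.inr hg))⟩, (phi_spec _).unique (relD hg)⟩
  intro σ
  obtain ⟨a, b, c, e, h⟩ := perm_words σ
  have : σ ∈ phi.range := by
    rw [h]
    exact mul_mem (mul_mem (mul_mem (pow_mem hD _) (pow_mem hW _)) (pow_mem hI _))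
      (pow_mem (mul_mem (mul_mem hW hI) (inv_mem hW)) _)
  exact this

lemma center_iff (g : G) : g ∈ Subgroup.center G ↔
      ((g : GL (Fin 2) ℂ) : Matrix (Fin 2) (Fin 2) ℂ) = 1 ∨
      ((g : GL (Fin 2) ℂ) : Matrix (Fin 2) (Fin 2) ℂ) = -1 := by
  constructor
  · intro hg
    have : phi g = 1 := by
      apply perm_center
      intro τ
      obtain ⟨t, rfl⟩ := phi_surj τ
      rw [← map_mul, ← map_mul, Subgroup.mem_center_iff.1 hg t]
    have h := phi_spec g
    rw [this] at h
    exact h.ker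
  · intro h
    rw [Subgroup.mem_center_iff]
    intro x
    apply Subtype.ext
    apply Units.ext
    show x.1.val * g.1.val = g.1.val * x.1.val
    rcases h with h | h <;> rw [h] <;> simp

lemma ker_phi : phi.ker = Subgroup.center G := by
  ext g
  rw [center_iff, MonoidHom.mem_ker]
  constructor
  · intro this
    have h := phi_spec g
    rw [this] at h
    exact h.ker
  · intro h
    refine (phi_spec g).unique ⟨?_, ?_⟩
    · intro a
      left
      rcases h with h | h <;> rw [h] <;> simp
    · rcases h with h | h <;> rw [h] <;> simp [Matrix.det_fin_two]

theorem center_and_quotient :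
    (∀ g : G, g ∈ Subgroup.center G ↔
      ((g : GL (Fin 2) ℂ) : Matrix (Fin 2) (Fin 2) ℂ) = 1 ∨
      ((g : GL (Fin 2) ℂ) : Matrix (Fin 2) (Fin 2) ℂ) = -1) ∧
    Nonempty ((G ⧸ Subgroup.center G) ≃* Equiv.Perm (Fin 4)) := by
  refine ⟨center_iff, ⟨?_⟩⟩
  exact (QuotientGroup.quotientMulEquivOfEq ker_phi.symm).trans
    (QuotientGroup.quotientKerEquivOfSurjective phi phi_surj)
end
end

section
/- The real group algebra of the symmetric group on 3 letters is isomorphic, as an ℝ-algebra, to the product ℝ × ℝ × M₂(ℝ), where M₂(ℝ) denotes the algebra of 2×2 real matrices. -/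
noncomputable section
set_option linter.unusedSimpArgs false

/-- The standard two-dimensional representation on integer matrices. -/
def stdRepZ : Equiv.Perm (Fin 3) →* Matrix (Fin 2) (Fin 2) ℤ where
  toFun g := Matrix.of fun i j =>
    (if g j.castSucc = i.castSucc then 1 else 0) - (if g 2 = i.castSucc then 1 else 0)
  map_one' := by decide
  map_mul' := by decide

/-- The sign, as an integer-valued character. -/
def signZ : Equiv.Perm (Fin 3) →* ℤ :=
  (Units.coeHom ℤ).comp Equiv.Perm.sign

/-- The product of the three irreducible representations. -/
def allRep : Equiv.Perm (Fin 3) →* ℝ × ℝ × Matrix (Fin 2) (Fin 2) ℝ :=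
  MonoidHom.prod 1 (MonoidHom.prod ((Int.castRingHom ℝ : ℤ →* ℝ).comp signZ)
    ((RingHom.mapMatrix (m := Fin 2) (Int.castRingHom ℝ)).toMonoidHom.comp stdRepZ))

/-- The Fourier inversion coefficients. -/
def permCoeff (p : ℝ × ℝ × Matrix (Fin 2) (Fin 2) ℝ) (g : Equiv.Perm (Fin 3)) : ℝ :=
  (p.1 + (signZ g : ℝ) * p.2.1 +
    2 * Matrix.trace ((stdRepZ g⁻¹).map (Int.cast : ℤ → ℝ) * p.2.2)) / 6

lemma sum_perm3 {A : Type*} [AddCommMonoid A] (f : Equiv.Perm (Fin 3) → A) :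
    ∑ g, f g = f 1 + (f (Equiv.swap 0 1) + (f (Equiv.swap 0 2) + (f (Equiv.swap 1 2) +
      (f (Equiv.swap 0 1 * Equiv.swap 1 2) + f (Equiv.swap 1 2 * Equiv.swap 0 1))))) := by
  have h : (Finset.univ : Finset (Equiv.Perm (Fin 3))) = {1, Equiv.swap 0 1, Equiv.swap 0 2,
    Equiv.swap 1 2, Equiv.swap 0 1 * Equiv.swap 1 2, Equiv.swap 1 2 * Equiv.swap 0 1} := by decide
  rw [h, Finset.sum_insert (by decide), Finset.sum_insert (by decide),
    Finset.sum_insert (by decide), Finset.sum_insert (by decide),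
    Finset.sum_insert (by decide), Finset.sum_singleton]

lemma std01 : stdRepZ (Equiv.swap 0 1) = !![0, 1; 1, 0] := by decide
lemma std02 : stdRepZ (Equiv.swap 0 2) = !![-1, -1; 0, 1] := by decide
lemma std12 : stdRepZ (Equiv.swap 1 2) = !![1, 0; -1, -1] := by decide
lemma sgn01 : signZ (Equiv.swap 0 1) = -1 := by decide
lemma sgn02 : signZ (Equiv.swap 0 2) = -1 := by decide
lemma sgn12 : signZ (Equiv.swap 1 2) = -1 := by decide

lemma allRep_surj :
    Function.Surjective (MonoidAlgebra.lift ℝ (ℝ × ℝ × Matrix (Fin 2) (Fin 2) ℝ)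
      (Equiv.Perm (Fin 3)) allRep) := by
  intro p
  refine ⟨∑ g, MonoidAlgebra.single g (permCoeff p g), ?_⟩
  obtain ⟨x, y, M⟩ := p
  rw [map_sum]
  simp only [MonoidAlgebra.lift_single]
  rw [sum_perm3]
  refine Prod.ext ?_ (Prod.ext ?_ ?_)
  · simp [allRep, permCoeff, std01, std02, std12, sgn01, sgn02, sgn12, Matrix.trace_fin_two,
      Matrix.mul_apply, Fin.sum_univ_two]
    ring
  · simp [allRep, permCoeff, std01, std02, std12, sgn01, sgn02, sgn12, Matrix.trace_fin_two,
      Matrix.mul_apply, Fin.sum_univ_two]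
    ring
  · ext i j
    fin_cases i <;> fin_cases j <;>
    · simp [allRep, permCoeff, std01, std02, std12, sgn01, sgn02, sgn12, Matrix.trace_fin_two,
        Matrix.mul_apply, Fin.sum_univ_two]
      ring

theorem group_algebra_sym3 :
    Nonempty (MonoidAlgebra ℝ (Equiv.Perm (Fin 3)) ≃ₐ[ℝ]
      ℝ × ℝ × Matrix (Fin 2) (Fin 2) ℝ) := by
  let φ := MonoidAlgebra.lift ℝ (ℝ × ℝ × Matrix (Fin 2) (Fin 2) ℝ) (Equiv.Perm (Fin 3)) allRep
  let e : MonoidAlgebra ℝ (Equiv.Perm (Fin 3)) ≃ₗ[ℝ] (Equiv.Perm (Fin 3) →₀ ℝ) :=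
    MonoidAlgebra.coeffLinearEquiv ℝ
  have hfin : Module.Finite ℝ (MonoidAlgebra ℝ (Equiv.Perm (Fin 3))) := Module.Finite.equiv e.symm
  have hd : Module.finrank ℝ (MonoidAlgebra ℝ (Equiv.Perm (Fin 3))) =
      Module.finrank ℝ (ℝ × ℝ × Matrix (Fin 2) (Fin 2) ℝ) := by
    rw [e.finrank_eq]
    simp [Module.finrank_matrix, Fintype.card_perm, Nat.factorial]
  have hs : Function.Surjective φ := allRep_surj
  have hi : Function.Injective φ :=
    (LinearMap.injective_iff_surjective_of_finrank_eq_finrank (f := φ.toLinearMap) hd).2 hs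
  exact ⟨AlgEquiv.ofBijective φ ⟨hi, hs⟩⟩
end
end

section
/- The real group algebra of the quaternion group Q₈ of order 8 is isomorphic, as an ℝ-algebra, to the product ℝ × ℝ × ℝ × ℝ × ℍ, where ℍ denotes the algebra of real quaternions. -/
noncomputable section

set_option linter.unusedSimpArgs false

/-- The quaternion `i`. -/
def q8i : Quaternion ℝ := ⟨0, 1, 0, 0⟩

/-- The quaternion `j`. -/
def q8j : Quaternion ℝ := ⟨0, 0, 1, 0⟩

lemma q8i_re : q8i.re = 0 := rfl
lemma q8i_imI : q8i.imI = 1 := rfl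
lemma q8i_imJ : q8i.imJ = 0 := rfl
lemma q8i_imK : q8i.imK = 0 := rfl
lemma q8j_re : q8j.re = 0 := rfl
lemma q8j_imI : q8j.imI = 0 := rfl
lemma q8j_imJ : q8j.imJ = 1 := rfl
lemma q8j_imK : q8j.imK = 0 := rfl

lemma q8o_re : (1 : Quaternion ℝ).re = 1 := rfl
lemma q8o_imI : (1 : Quaternion ℝ).imI = 0 := rfl
lemma q8o_imJ : (1 : Quaternion ℝ).imJ = 0 := rfl
lemma q8o_imK : (1 : Quaternion ℝ).imK = 0 := rfl

lemma q8_ext {x y : ℝ × ℝ × ℝ × ℝ × Quaternion ℝ} (h1 : x.1 = y.1) (h2 : x.2.1 = y.2.1)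
    (h3 : x.2.2.1 = y.2.2.1) (h4 : x.2.2.2.1 = y.2.2.2.1)
    (h5 : x.2.2.2.2.re = y.2.2.2.2.re) (h6 : x.2.2.2.2.imI = y.2.2.2.2.imI)
    (h7 : x.2.2.2.2.imJ = y.2.2.2.2.imJ) (h8 : x.2.2.2.2.imK = y.2.2.2.2.imK) : x = y :=
  Prod.ext h1 (Prod.ext h2 (Prod.ext h3 (Prod.ext h4 (Quaternion.ext _ _ h5 h6 h7 h8))))

/-- The image of the generator `a`. -/
def q8A : ℝ × ℝ × ℝ × ℝ × Quaternion ℝ := (1, 1, -1, -1, q8i)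

/-- The image of the generator `x`. -/
def q8X : ℝ × ℝ × ℝ × ℝ × Quaternion ℝ := (1, -1, 1, -1, q8j)

/-- The underlying function of the representation. -/
def q8Fun : QuaternionGroup 2 → ℝ × ℝ × ℝ × ℝ × Quaternion ℝ
  | .a i => q8A ^ (ZMod.val i)
  | .xa i => q8X * q8A ^ (ZMod.val i)

lemma q8A_four : q8A ^ 4 = 1 := by
  simp only [pow_succ, pow_zero, one_mul]
  apply q8_ext <;> simp [q8A, q8i_re, q8i_imI, q8i_imJ, q8i_imK,
    q8j_re, q8j_imI, q8j_imJ, q8j_imK, q8o_re, q8o_imI, q8o_imJ, q8o_imK]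

lemma q8X_sq : q8X * q8X = q8A ^ 2 := by
  simp only [pow_succ, pow_zero, one_mul]
  apply q8_ext <;> simp [q8A, q8X, q8i_re, q8i_imI, q8i_imJ, q8i_imK,
    q8j_re, q8j_imI, q8j_imJ, q8j_imK, q8o_re, q8o_imI, q8o_imJ, q8o_imK]

lemma q8A_X : q8A * q8X = q8X * q8A ^ 3 := by
  simp only [pow_succ, pow_zero, one_mul]
  apply q8_ext <;> simp [q8A, q8X, q8i_re, q8i_imI, q8i_imJ, q8i_imK,
    q8j_re, q8j_imI, q8j_imJ, q8j_imK, q8o_re, q8o_imI, q8o_imJ, q8o_imK]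

lemma q8A_pow_X (k : ℕ) : q8A ^ k * q8X = q8X * q8A ^ (3 * k) := by
  induction k with
  | zero => simp
  | succ k ih =>
    rw [pow_succ, mul_assoc, q8A_X, ← mul_assoc, ih, mul_assoc, ← pow_add]
    rfl

lemma q8A_pow_mod {m n : ℕ} (h : m % 4 = n % 4) : q8A ^ m = q8A ^ n := by
  rw [pow_eq_pow_mod m q8A_four, pow_eq_pow_mod n q8A_four, h]

lemma q8_val_add : ∀ i j : ZMod (2 * 2), (i + j).val % 4 = (i.val + j.val) % 4 := by decide
lemma q8_val_sub : ∀ i j : ZMod (2 * 2), (j - i).val % 4 = (3 * i.val + j.val) % 4 := by decide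
lemma q8_val_xx : ∀ i j : ZMod (2 * 2),
    (((2 : ℕ) : ZMod (2 * 2)) + j - i).val % 4 = (2 + (3 * i.val + j.val)) % 4 := by decide

/-- The representation as a monoid homomorphism. -/
def q8Hom : QuaternionGroup 2 →* ℝ × ℝ × ℝ × ℝ × Quaternion ℝ where
  toFun := q8Fun
  map_one' := by
    change q8A ^ (ZMod.val (0 : ZMod (2 * 2))) = 1
    simp
  map_mul' := by
    rintro (i | i) (j | j)
    · simp only [QuaternionGroup.a_mul_a, q8Fun]
      rw [← pow_add]
      exact q8A_pow_mod (q8_val_add i j)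
    · simp only [QuaternionGroup.a_mul_xa, q8Fun]
      rw [← mul_assoc, q8A_pow_X, mul_assoc, ← pow_add, q8A_pow_mod (q8_val_sub i j)]
    · simp only [QuaternionGroup.xa_mul_a, q8Fun]
      rw [mul_assoc, ← pow_add, q8A_pow_mod (q8_val_add i j)]
    · simp only [QuaternionGroup.xa_mul_xa, q8Fun]
      rw [mul_assoc, ← mul_assoc (q8A ^ _), q8A_pow_X, mul_assoc, ← pow_add, ← mul_assoc,
        q8X_sq, ← pow_add]
      exact q8A_pow_mod (q8_val_xx i j)

lemma q8_surj : Function.Surjective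
    (MonoidAlgebra.lift ℝ (ℝ × ℝ × ℝ × ℝ × Quaternion ℝ) (QuaternionGroup 2) q8Hom) := by
  rintro ⟨p, q, r, s, h⟩
  refine ⟨MonoidAlgebra.single (.a 0) (((p + q + r + s) / 4 + h.re) / 2)
    + MonoidAlgebra.single (.a 1) (((p + q - r - s) / 4 + h.imI) / 2)
    + MonoidAlgebra.single (.a 2) (((p + q + r + s) / 4 - h.re) / 2)
    + MonoidAlgebra.single (.a 3) (((p + q - r - s) / 4 - h.imI) / 2)
    + MonoidAlgebra.single (.xa 0) (((p - q + r - s) / 4 + h.imJ) / 2)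
    + MonoidAlgebra.single (.xa 1) (((p - q - r + s) / 4 - h.imK) / 2)
    + MonoidAlgebra.single (.xa 2) (((p - q + r - s) / 4 - h.imJ) / 2)
    + MonoidAlgebra.single (.xa 3) (((p - q - r + s) / 4 + h.imK) / 2), ?_⟩
  have e0 : q8Hom (.a 0) = 1 := map_one q8Hom
  have e1 : q8Hom (.a 1) = q8A := pow_one q8A
  have e2 : q8Hom (.a 2) = q8A * q8A := pow_two q8A
  have e3 : q8Hom (.a 3) = q8A * q8A * q8A := pow_three' q8A
  have f0 : q8Hom (.xa 0) = q8X := mul_one q8X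
  have f1 : q8Hom (.xa 1) = q8X * q8A := congrArg (q8X * ·) (pow_one q8A)
  have f2 : q8Hom (.xa 2) = q8X * (q8A * q8A) := congrArg (q8X * ·) (pow_two q8A)
  have f3 : q8Hom (.xa 3) = q8X * (q8A * q8A * q8A) := congrArg (q8X * ·) (pow_three' q8A)
  simp only [map_add, MonoidAlgebra.lift_single, e0, e1, e2, e3, f0, f1, f2, f3]
  apply q8_ext <;> simp [q8A, q8X, q8i_re, q8i_imI, q8i_imJ, q8i_imK,
    q8j_re, q8j_imI, q8j_imJ, q8j_imK, q8o_re, q8o_imI, q8o_imJ, q8o_imK] <;> ring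

theorem group_algebra_quaternion_group :
    Nonempty (MonoidAlgebra ℝ (QuaternionGroup 2) ≃ₐ[ℝ]
      ℝ × ℝ × ℝ × ℝ × Quaternion ℝ) := by
  have b : Module.Basis (QuaternionGroup 2) ℝ (MonoidAlgebra ℝ (QuaternionGroup 2)) :=
    ⟨MonoidAlgebra.coeffLinearEquiv ℝ⟩
  have : Module.Finite ℝ (MonoidAlgebra ℝ (QuaternionGroup 2)) := Module.Finite.of_basis b
  have hd : Module.finrank ℝ (MonoidAlgebra ℝ (QuaternionGroup 2)) =
      Module.finrank ℝ (ℝ × ℝ × ℝ × ℝ × Quaternion ℝ) := by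
    rw [Module.finrank_eq_card_basis b, QuaternionGroup.card]
    simp [Quaternion.finrank_eq_four]
  have hinj := (LinearMap.injective_iff_surjective_of_finrank_eq_finrank hd
    (f := (MonoidAlgebra.lift ℝ (ℝ × ℝ × ℝ × ℝ × Quaternion ℝ)
      (QuaternionGroup 2) q8Hom).toLinearMap)).2 q8_surj
  exact ⟨AlgEquiv.ofBijective _ ⟨hinj, q8_surj⟩⟩
end
end

section
/- The real group algebra ℝ[G] of the group G is isomorphic, as an ℝ-algebra, to the product ℝ × ℝ × M₂(ℝ) × M₂(ℂ) × M₃(ℝ) × M₃(ℝ) × M₄(ℝ), where Mₙ(ℝ) and M₂(ℂ) denote the indicated real and complex matrix algebras (M₂(ℂ) regarded as an ℝ-algebra). -/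
open Matrix Complex
open scoped MatrixGroups

noncomputable section

/-- The model of `G`: invertible matrices over the field with three elements. -/
abbrev HH := GL (Fin 2) (ZMod 3)

namespace GAux

/-- First rows (real and imaginary parts, scaled) of the complex matrices attached to the
matrices `!![a, b; c, d]` over `ZMod 3`, listed lexicographically in `(a, b, c, d)`. -/
def table : List (ℤ × ℤ × ℤ × ℤ) :=
  [
   (0, 0, 0, 0), (0, 0, 0, 0), (0, 0, 0, 0), (0, 0, 0, 0), (0, 0, 0, 0), (0, 0, 0, 0),
   (0, 0, 0, 0), (0, 0, 0, 0), (0, 0, 0, 0), (0, 0, 0, 0), (0, 0, 0, 0), (0, 0, 0, 0),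
   (-1, 0, 1, 0), (0, 1, -1, 0), (1, -1, 0, 0), (0, 0, 2, 0), (1, -1, -1, -1), (-1, 1, -1, 1),
   (0, 0, 0, 0), (0, 0, 0, 0), (0, 0, 0, 0), (0, 0, -2, 0), (1, -1, 1, -1), (-1, 1, 1, 1),
   (1, 0, -1, 0), (-1, 1, 0, 0), (0, -1, 1, 0), (0, 0, 0, 0), (2, 0, 0, 0), (1, 0, 1, 0),
   (0, 0, 0, 0), (-1, -1, -1, 1), (-1, 0, 0, -1), (0, 0, 0, 0), (-1, 1, 1, -1), (0, 0, -1, 1),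
   (0, 0, 0, 0), (-1, -1, 1, 1), (-1, 0, 0, 1), (1, 1, 0, 0), (0, 0, 0, 0), (0, 0, 0, -2),
   (1, 1, -1, 1), (0, -1, 0, -1), (0, 0, 0, 0), (0, 0, 0, 0), (-1, 1, -1, -1), (0, 0, -1, -1),
   (1, 1, 1, 1), (0, -1, 0, 1), (0, 0, 0, 0), (0, 1, 1, 0), (0, 0, 0, 0), (0, -2, 0, 0),
   (0, 0, 0, 0), (-1, 0, -1, 0), (-2, 0, 0, 0), (0, 0, 0, 0), (0, 0, 1, -1), (1, -1, -1, 1),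
   (0, 0, 0, 0), (1, 0, 0, 1), (1, 1, 1, -1), (0, 0, 0, 0), (0, 0, 1, 1), (1, -1, 1, 1),
   (0, -1, -1, 0), (0, 2, 0, 0), (0, 0, 0, 0), (-1, -1, -1, -1), (0, 0, 0, 0), (0, 1, 0, -1),
   (0, 0, 0, 0), (1, 0, 0, -1), (1, 1, -1, -1), (-1, -1, 1, -1), (0, 0, 0, 0), (0, 1, 0, 1),
   (-1, -1, 0, 0), (0, 0, 0, 2), (0, 0, 0, 0)]

def row (a b c d : ZMod 3) : ℤ × ℤ × ℤ × ℤ :=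
  table.getD (27 * a.val + 9 * b.val + 3 * c.val + d.val) (0, 0, 0, 0)

/-- The sign character. -/
def sg (a b c d : ZMod 3) : ℤ := if a * d - b * c = 1 then 1 else -1

/-- Scaled complex matrix with Gaussian integer entries. -/
def gm (a b c d : ZMod 3) : Matrix (Fin 2) (Fin 2) GaussianInt :=
  let r := row a b c d
  let s := sg a b c d
  !![⟨r.1, r.2.1⟩, ⟨r.2.2.1, r.2.2.2⟩;
     ⟨-s * r.2.2.1, s * r.2.2.2⟩, ⟨s * r.1, -s * r.2.1⟩]

def vx : Fin 4 → ZMod 3 := ![1, 0, 1, 1]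
def vy : Fin 4 → ZMod 3 := ![0, 1, 1, 2]

/-- Monomial representation on odd functions on the nonzero vectors. -/
def m4 (a b c d : ZMod 3) : Matrix (Fin 4) (Fin 4) ℤ := fun p q =>
  if a * vx q + b * vy q = vx p ∧ c * vx q + d * vy q = vy p then 1
  else if a * vx q + b * vy q = - vx p ∧ c * vx q + d * vy q = - vy p then -1 else 0

/-- Permutation matrix on the four lines. -/
def pm (a b c d : ZMod 3) (p q : Fin 4) : ℤ := m4 a b c d p q ^ 2

def m3 (a b c d : ZMod 3) : Matrix (Fin 3) (Fin 3) ℤ := fun p q =>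
  pm a b c d p.castSucc q.castSucc - pm a b c d p.castSucc 3

/-- Permutation matrix on the three pairings of the four lines. -/
def tm (a b c d : ZMod 3) (p q : Fin 3) : ℤ :=
  let e : Fin 4 → Fin 4 → ℤ := fun r s => pm a b c d r 0 * pm a b c d s q.succ
  match p with
  | 0 => e 0 1 + e 1 0 + e 2 3 + e 3 2
  | 1 => e 0 2 + e 2 0 + e 1 3 + e 3 1
  | 2 => e 0 3 + e 3 0 + e 1 2 + e 2 1

def m2 (a b c d : ZMod 3) : Matrix (Fin 2) (Fin 2) ℤ := fun p q =>
  tm a b c d p.castSucc q.castSucc - tm a b c d p.castSucc 2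

def gens : List (ZMod 3 × ZMod 3 × ZMod 3 × ZMod 3) :=
  [(0, 1, 2, 0), (0, 2, 1, 2), (0, 1, 1, 0)]

theorem sg_mul : ∀ s ∈ gens, ∀ a b c d : ZMod 3, a * d - b * c ≠ 0 →
    sg (s.1 * a + s.2.1 * c) (s.1 * b + s.2.1 * d)
      (s.2.2.1 * a + s.2.2.2 * c) (s.2.2.1 * b + s.2.2.2 * d) =
    sg s.1 s.2.1 s.2.2.1 s.2.2.2 * sg a b c d := by
  decide +kernel

theorem m4_mul : ∀ s ∈ gens, ∀ a b c d : ZMod 3, a * d - b * c ≠ 0 →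
    m4 (s.1 * a + s.2.1 * c) (s.1 * b + s.2.1 * d)
      (s.2.2.1 * a + s.2.2.2 * c) (s.2.2.1 * b + s.2.2.2 * d) =
    m4 s.1 s.2.1 s.2.2.1 s.2.2.2 * m4 a b c d := by
  decide +kernel

theorem m3_mul : ∀ s ∈ gens, ∀ a b c d : ZMod 3, a * d - b * c ≠ 0 →
    m3 (s.1 * a + s.2.1 * c) (s.1 * b + s.2.1 * d)
      (s.2.2.1 * a + s.2.2.2 * c) (s.2.2.1 * b + s.2.2.2 * d) =
    m3 s.1 s.2.1 s.2.2.1 s.2.2.2 * m3 a b c d := by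
  decide +kernel

theorem m2_mul : ∀ s ∈ gens, ∀ a b c d : ZMod 3, a * d - b * c ≠ 0 →
    m2 (s.1 * a + s.2.1 * c) (s.1 * b + s.2.1 * d)
      (s.2.2.1 * a + s.2.2.2 * c) (s.2.2.1 * b + s.2.2.2 * d) =
    m2 s.1 s.2.1 s.2.2.1 s.2.2.2 * m2 a b c d := by
  decide +kernel

theorem gm_mul : ∀ s ∈ gens, ∀ a b c d : ZMod 3, a * d - b * c ≠ 0 →
    (if sg s.1 s.2.1 s.2.2.1 s.2.2.2 = -1 ∧ sg a b c d = -1 then (1 : GaussianInt) else 2) •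
    gm (s.1 * a + s.2.1 * c) (s.1 * b + s.2.1 * d)
      (s.2.2.1 * a + s.2.2.2 * c) (s.2.2.1 * b + s.2.2.2 * d) =
    gm s.1 s.2.1 s.2.2.1 s.2.2.2 * gm a b c d := by
  decide +kernel

theorem char_sum : ∀ a b c d : ZMod 3, a * d - b * c ≠ 0 →
    1 + sg a b c d + 2 * (m2 a b c d).trace +
      (if sg a b c d = 1 then 4 * (row a b c d).1 else 0) +
      3 * (m3 a b c d).trace + 3 * (sg a b c d * (m3 a b c d).trace) +
      4 * (m4 a b c d).trace =
    if a = 1 ∧ b = 0 ∧ c = 0 ∧ d = 1 then 48 else 0 := by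
  decide +kernel

/-- Words in the generators. -/
theorem words : ∀ a b c d : ZMod 3, a * d - b * c ≠ 0 →
    ∃ x : Fin 4, ∃ y : Fin 4, ∃ z : Fin 3, ∃ t : Fin 2,
    !![a, b; c, d] = !![0, 1; 2, 0] ^ x.val *
      (!![0, 2; 1, 2] * !![0, 1; 2, 0] ^ y.val * !![0, 2; 1, 2] ^ 2) *
      !![0, 2; 1, 2] ^ z.val * !![0, 1; 1, 0] ^ t.val := by
  decide +kernel

/-- Evaluate a function of four entries on an invertible matrix. -/
def ev {α : Type*} (F : ZMod 3 → ZMod 3 → ZMod 3 → ZMod 3 → α) (h : HH) : α :=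
  F (h.1 0 0) (h.1 0 1) (h.1 1 0) (h.1 1 1)

def gi : HH := ⟨!![0, 1; 2, 0], !![0, 2; 1, 0], by decide, by decide⟩
def gw : HH := ⟨!![0, 2; 1, 2], !![2, 1; 2, 0], by decide, by decide⟩
def gd : HH := ⟨!![0, 1; 1, 0], !![0, 1; 1, 0], by decide, by decide⟩

theorem det_ne (h : HH) : h.1 0 0 * h.1 1 1 - h.1 0 1 * h.1 1 0 ≠ 0 := by
  have h1 : IsUnit h.1.det := (Matrix.isUnit_iff_isUnit_det _).1 h.isUnit
  rw [Matrix.det_fin_two] at h1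
  exact h1.ne_zero

theorem closure_eq : Submonoid.closure ({gi, gw, gd} : Set HH) = ⊤ := by
  rw [eq_top_iff]
  intro h _
  obtain ⟨x, y, z, t, e⟩ := words _ _ _ _ (det_ne h)
  have hi : gi ∈ Submonoid.closure ({gi, gw, gd} : Set HH) :=
    Submonoid.subset_closure (by simp)
  have hw : gw ∈ Submonoid.closure ({gi, gw, gd} : Set HH) :=
    Submonoid.subset_closure (by simp)
  have hd : gd ∈ Submonoid.closure ({gi, gw, gd} : Set HH) :=
    Submonoid.subset_closure (by simp)
  have : h = gi ^ x.val * (gw * gi ^ y.val * gw ^ 2) * gw ^ z.val * gd ^ t.val := by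
    apply Units.ext
    rw [← Matrix.eta_fin_two h.1] at e
    simpa [gi, gw, gd] using e
  rw [this]
  exact mul_mem (mul_mem (mul_mem (pow_mem hi _)
    (mul_mem (mul_mem hw (pow_mem hi _)) (pow_mem hw _))) (pow_mem hw _)) (pow_mem hd _)

/-- A map which is multiplicative with respect to the generators is a homomorphism. -/
def mkHom {M : Type*} [Monoid M] (F : HH → M) (h1 : F 1 = 1)
    (hg : ∀ s ∈ ({gi, gw, gd} : Set HH), ∀ h, F (s * h) = F s * F h) : HH →* M where
  toFun := F
  map_one' := h1
  map_mul' x := by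
    have hx : x ∈ Submonoid.closure ({gi, gw, gd} : Set HH) := by simp [closure_eq]
    induction hx using Submonoid.closure_induction with
    | mem s hs => exact hg s hs
    | one => intro y; simp [h1]
    | mul a b _ _ ha hb => intro y; rw [mul_assoc, ha, hb, ha b, mul_assoc]

theorem gen_mem {s : HH} (hs : s ∈ ({gi, gw, gd} : Set HH)) :
    (s.1 0 0, s.1 0 1, s.1 1 0, s.1 1 1) ∈ gens := by
  rcases hs with rfl | rfl | rfl <;> decide

theorem ev_mul {α : Type*} (F : ZMod 3 → ZMod 3 → ZMod 3 → ZMod 3 → α) (s h : HH) :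
    ev F (s * h) = F (s.1 0 0 * h.1 0 0 + s.1 0 1 * h.1 1 0)
      (s.1 0 0 * h.1 0 1 + s.1 0 1 * h.1 1 1) (s.1 1 0 * h.1 0 0 + s.1 1 1 * h.1 1 0)
      (s.1 1 0 * h.1 0 1 + s.1 1 1 * h.1 1 1) := by
  simp [ev, Matrix.mul_apply, Fin.sum_univ_two]

def rsg : HH →* ℤ := mkHom (ev sg) (by decide +kernel) (by
  intro s hs h
  rw [ev_mul]
  exact sg_mul _ (gen_mem hs) _ _ _ _ (det_ne h))

def rm4 : HH →* Matrix (Fin 4) (Fin 4) ℤ := mkHom (ev m4) (by decide +kernel) (by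
  intro s hs h
  rw [ev_mul]
  exact m4_mul _ (gen_mem hs) _ _ _ _ (det_ne h))

def rm3 : HH →* Matrix (Fin 3) (Fin 3) ℤ := mkHom (ev m3) (by decide +kernel) (by
  intro s hs h
  rw [ev_mul]
  exact m3_mul _ (gen_mem hs) _ _ _ _ (det_ne h))

def rm2 : HH →* Matrix (Fin 2) (Fin 2) ℤ := mkHom (ev m2) (by decide +kernel) (by
  intro s hs h
  rw [ev_mul]
  exact m2_mul _ (gen_mem hs) _ _ _ _ (det_ne h))

def cst (s : ℤ) : ℂ := if s = 1 then 1 / 2 else (Real.sqrt 2 : ℂ) / 2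

theorem sqrt_sq : (Real.sqrt 2 : ℂ) * (Real.sqrt 2 : ℂ) = 2 := by
  rw [← Complex.ofReal_mul, Real.mul_self_sqrt (by norm_num)]; norm_num

theorem toC_two : GaussianInt.toComplex 2 = 2 := map_ofNat _ 2

theorem sg_cases (a b c d : ZMod 3) : sg a b c d = 1 ∨ sg a b c d = -1 := by
  unfold sg; split_ifs <;> simp

/-- The complex representation as a function. -/
def cf (h : HH) : Matrix (Fin 2) (Fin 2) ℂ :=
  cst (ev sg h) • GaussianInt.toComplex.mapMatrix (ev gm h)

theorem cst_mul (s t : ℤ) (hs : s = 1 ∨ s = -1) (ht : t = 1 ∨ t = -1) :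
    cst s * cst t * GaussianInt.toComplex (if s = -1 ∧ t = -1 then (1 : GaussianInt) else 2) =
      cst (s * t) := by
  rcases hs with rfl | rfl <;> rcases ht with rfl | rfl <;> simp [cst, toC_two] <;>
    first | ring1 | linear_combination (1 / 4) * sqrt_sq

theorem cf_mul (s : HH) (hs : s ∈ ({gi, gw, gd} : Set HH)) (h : HH) :
    cf (s * h) = cf s * cf h := by
  have e1 := gm_mul _ (gen_mem hs) _ _ _ _ (det_ne h)
  have e2 := sg_mul _ (gen_mem hs) _ _ _ _ (det_ne h)
  rw [← ev_mul gm] at e1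
  rw [← ev_mul sg] at e2
  unfold cf
  rw [smul_mul_smul_comm, ← map_mul, e2]
  unfold ev at e1 ⊢
  rw [← e1, ← cst_mul _ _ (sg_cases _ _ _ _) (sg_cases _ _ _ _)]
  dsimp only
  ext i j
  simp only [Matrix.smul_apply, RingHom.mapMatrix_apply, Matrix.map_apply, smul_eq_mul, map_mul]
  ring

theorem cf_one : cf 1 = 1 := by
  have e1 : ev gm 1 = 2 := by decide +kernel
  have e2 : ev sg 1 = 1 := by decide +kernel
  unfold cf
  rw [e1, e2, map_ofNat]
  ext i j
  fin_cases i <;> fin_cases j <;> simp [cst, Matrix.ofNat_apply]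

/-- The complex representation. -/
def rc : HH →* Matrix (Fin 2) (Fin 2) ℂ := mkHom cf cf_one cf_mul

def rcu : HH →* GL (Fin 2) ℂ := rc.toHomUnits

theorem cf_gi : cf gi = iM := by
  have e1 : ev gm gi = !![0, 2; -2, 0] := by decide +kernel
  have e2 : ev sg gi = 1 := by decide +kernel
  unfold cf
  rw [e1, e2]
  ext i j
  fin_cases i <;> fin_cases j <;> simp [cst, iM, toC_two]

theorem cf_gw : cf gw = wM := by
  have e1 : ev gm gw = !![⟨-1, 1⟩, ⟨1, 1⟩; ⟨-1, 1⟩, ⟨-1, -1⟩] := by decide +kernel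
  have e2 : ev sg gw = 1 := by decide +kernel
  unfold cf
  rw [e1, e2]
  ext i j
  fin_cases i <;> fin_cases j <;> simp [cst, wM, GaussianInt.toComplex_def', sub_eq_add_neg]

theorem cf_gd : cf gd = dM := by
  have e1 : ev gm gd = !![-1, 1; 1, 1] := by decide +kernel
  have e2 : ev sg gd = -1 := by decide +kernel
  have e3 : (Real.sqrt 2 : ℂ) ≠ 0 := by
    intro h
    have := sqrt_sq
    rw [h] at this
    norm_num at this
  have e4 : (Real.sqrt 2 : ℂ) / 2 = (Real.sqrt 2 : ℂ)⁻¹ := by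
    field_simp
    linear_combination sqrt_sq
  unfold cf
  rw [e1, e2]
  ext i j
  fin_cases i <;> fin_cases j <;> simp [cst, dM, e4]

theorem closure_eq' : Subgroup.closure ({gi, gw, gd} : Set HH) = ⊤ := by
  rw [eq_top_iff]
  intro h _
  have : h ∈ Submonoid.closure ({gi, gw, gd} : Set HH) := by simp [closure_eq]
  exact Subgroup.le_closure_toSubmonoid _ this

theorem range_eq : rcu.range = G := by
  rw [MonoidHom.range_eq_map, ← closure_eq', MonoidHom.map_closure]
  unfold G
  congr 1
  have hi : (rcu gi : Matrix (Fin 2) (Fin 2) ℂ) = iM := cf_gi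
  have hw : (rcu gw : Matrix (Fin 2) (Fin 2) ℂ) = wM := cf_gw
  have hd : (rcu gd : Matrix (Fin 2) (Fin 2) ℂ) = dM := cf_gd
  ext g
  rw [Set.image_insert_eq, Set.image_insert_eq, Set.image_singleton]
  simp only [Set.mem_insert_iff, Set.mem_singleton_iff, Set.mem_ofPred_eq, Units.ext_iff, hi, hw, hd]

theorem eq_one_of {h : HH} (e : h.1 0 0 = 1 ∧ h.1 0 1 = 0 ∧ h.1 1 0 = 0 ∧ h.1 1 1 = 1) :
    h = 1 := by
  apply Units.ext
  ext i j
  fin_cases i <;> fin_cases j <;> simp [e]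

theorem row_one : ∀ a b c d : ZMod 3, a * d - b * c ≠ 0 →
    (sg a b c d = 1 → (row a b c d).1 = 2 → a = 1 ∧ b = 0 ∧ c = 0 ∧ d = 1) ∧
    (sg a b c d = -1 → 2 * (row a b c d).1 ^ 2 ≠ 4) := by
  decide +kernel

theorem rcu_inj : Function.Injective rcu := by
  rw [injective_iff_map_eq_one]
  intro h e
  have e1 : cf h = 1 := congrArg Units.val e
  have e2 : cf h 0 0 = 1 := by rw [e1]; simp
  obtain ⟨r1, r2⟩ := row_one _ _ _ _ (det_ne h)
  have e3 := congrArg Complex.re e2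
  simp only [cf, ev, Matrix.smul_apply, RingHom.mapMatrix_apply, Matrix.map_apply, gm,
    Matrix.of_apply, Matrix.cons_val_zero, GaussianInt.toComplex_def', smul_eq_mul] at e3
  rcases sg_cases (h.1 0 0) (h.1 0 1) (h.1 1 0) (h.1 1 1) with hs | hs
  · rw [hs] at e3
    simp [cst] at e3
    refine eq_one_of (r1 hs ?_)
    have : ((row (h.1 0 0) (h.1 0 1) (h.1 1 0) (h.1 1 1)).1 : ℝ) = 2 := by linarith
    exact_mod_cast this
  · rw [hs] at e3
    simp [cst] at e3
    exfalso
    apply r2 hs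
    have h2 : Real.sqrt 2 * Real.sqrt 2 = 2 := Real.mul_self_sqrt (by norm_num)
    have : (2 : ℝ) * ((row (h.1 0 0) (h.1 0 1) (h.1 1 0) (h.1 1 1)).1 : ℝ) ^ 2 = 4 := by
      generalize ((row (h.1 0 0) (h.1 0 1) (h.1 1 0) (h.1 1 1)).1 : ℝ) = r at *
      have h3 : Real.sqrt 2 * r = 2 := by linarith
      calc 2 * r ^ 2 = (Real.sqrt 2 * Real.sqrt 2) * r ^ 2 := by rw [h2]
        _ = (Real.sqrt 2 * r) ^ 2 := by ring
        _ = 4 := by rw [h3]; norm_num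
    exact_mod_cast this

def equivG : HH ≃* G :=
  (MonoidHom.ofInjective rcu_inj).trans (MulEquiv.subgroupCongr range_eq)

abbrev AA := ℝ × ℝ × Matrix (Fin 2) (Fin 2) ℝ × Matrix (Fin 2) (Fin 2) ℂ ×
        Matrix (Fin 3) (Fin 3) ℝ × Matrix (Fin 3) (Fin 3) ℝ ×
        Matrix (Fin 4) (Fin 4) ℝ

def castM (n : ℕ) : Matrix (Fin n) (Fin n) ℤ →* Matrix (Fin n) (Fin n) ℝ :=
  ((Int.castRingHom ℝ).mapMatrix : Matrix (Fin n) (Fin n) ℤ →+* Matrix (Fin n) (Fin n) ℝ)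

/-- The twist of the three-dimensional representation by the sign. -/
def rm3' : HH →* Matrix (Fin 3) (Fin 3) ℤ where
  toFun h := rsg h • rm3 h
  map_one' := by simp
  map_mul' x y := by rw [map_mul, map_mul, smul_mul_smul_comm]

/-- All representations together. -/
def rho : HH →* AA :=
  (1 : HH →* ℝ).prod <| ((Int.castRingHom ℝ : ℤ →* ℝ).comp rsg).prod <|
    ((castM 2).comp rm2).prod <| rc.prod <| ((castM 3).comp rm3).prod <|
    ((castM 3).comp rm3').prod ((castM 4).comp rm4)

/-- The trace of the regular representation. -/
def tau : AA →ₗ[ℝ] ℝ where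
  toFun x := x.1 + x.2.1 + 2 * x.2.2.1.trace + 4 * x.2.2.2.1.trace.re +
    3 * x.2.2.2.2.1.trace + 3 * x.2.2.2.2.2.1.trace + 4 * x.2.2.2.2.2.2.trace
  map_add' x y := by simp only [Prod.fst_add, Prod.snd_add, Matrix.trace_add, Complex.add_re]; ring
  map_smul' r x := by
    simp only [Prod.smul_fst, Prod.smul_snd, Matrix.trace_smul, Complex.real_smul,
      Complex.re_ofReal_mul, smul_eq_mul, RingHom.id_apply]
    ring

theorem trace_cast (n : ℕ) (M : Matrix (Fin n) (Fin n) ℤ) :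
    (castM n M).trace = (M.trace : ℝ) := by
  simp [castM, Matrix.trace]

theorem trace_cf (h : HH) : 4 * (cf h).trace.re =
    ((if ev sg h = 1 then 4 * (ev row h).1 else 0 : ℤ) : ℝ) := by
  rw [Matrix.trace_fin_two]
  rcases sg_cases (h.1 0 0) (h.1 0 1) (h.1 1 0) (h.1 1 1) with hs | hs <;>
  · simp [cf, ev, gm, GaussianInt.toComplex_def', hs, cst]
    try ring

theorem tau_rho (h : HH) : tau (rho h) = if h = 1 then 48 else 0 := by
  have e := char_sum _ _ _ _ (det_ne h)
  have e1 : tau (rho h) = 1 + ((ev sg h : ℤ) : ℝ) + 2 * (castM 2 (ev m2 h)).trace +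
    4 * (cf h).trace.re + 3 * (castM 3 (ev m3 h)).trace +
    3 * (castM 3 (ev sg h • ev m3 h)).trace + 4 * (castM 4 (ev m4 h)).trace := rfl
  rw [e1, trace_cf, trace_cast, trace_cast, trace_cast, trace_cast, Matrix.trace_smul, smul_eq_mul]
  have e2 := congrArg (Int.cast : ℤ → ℝ) e
  by_cases hh : h = 1
  · rw [if_pos hh]
    have h5 : h.1 0 0 = 1 ∧ h.1 0 1 = 0 ∧ h.1 1 0 = 0 ∧ h.1 1 1 = 1 := by
      rw [hh]; decide
    rw [if_pos h5] at e2
    unfold ev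
    exact_mod_cast e2
  · rw [if_neg hh]
    rw [if_neg (fun h' => hh (eq_one_of h'))] at e2
    unfold ev
    exact_mod_cast e2

def phi : MonoidAlgebra ℝ HH →ₐ[ℝ] AA := MonoidAlgebra.lift ℝ AA HH rho

theorem tau_phi (x : MonoidAlgebra ℝ HH) : tau (phi x) = 48 * x.coeff 1 := by
  induction x using MonoidAlgebra.induction_linear with
  | zero => simp
  | add f g hf hg => rw [map_add, map_add, hf, hg, MonoidAlgebra.coeff_add, Finsupp.add_apply]; ring
  | single h r =>
    rw [phi, MonoidAlgebra.lift_single, map_smul, tau_rho, MonoidAlgebra.coeff_single,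
      Finsupp.single_apply]
    by_cases hh : h = 1 <;> simp [hh, mul_comm]

theorem phi_inj : Function.Injective phi := by
  rw [injective_iff_map_eq_zero]
  intro x hx
  ext g
  have h1 := tau_phi (MonoidAlgebra.single g⁻¹ 1 * x)
  rw [map_mul, hx, mul_zero, map_zero, MonoidAlgebra.coeff_single_mul_apply] at h1
  simpa using h1.symm

theorem finrank_eq : Module.finrank ℝ (MonoidAlgebra ℝ HH) = Module.finrank ℝ AA := by
  have h1 : Nat.card HH = 48 := by
    rw [Matrix.card_GL_field]; simp [Fin.prod_univ_two]
  have h2 : Module.finrank ℝ (MonoidAlgebra ℝ HH) = 48 := by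
    rw [← h1]
    rw [(MonoidAlgebra.coeffLinearEquiv ℝ).finrank_eq, Module.finrank_finsupp_self, Nat.card_eq_fintype_card]
  rw [h2]
  simp [Module.finrank_prod, Module.finrank_matrix]

theorem phi_bij : Function.Bijective phi := by
  have : Module.Finite ℝ (MonoidAlgebra ℝ HH) := inferInstance
  exact ⟨phi_inj, (LinearMap.injective_iff_surjective_of_finrank_eq_finrank finrank_eq
    (f := phi.toLinearMap)).1 phi_inj⟩

end GAux

theorem group_algebra_of_G :
    Nonempty (MonoidAlgebra ℝ G ≃ₐ[ℝ]
      ℝ × ℝ × Matrix (Fin 2) (Fin 2) ℝ × Matrix (Fin 2) (Fin 2) ℂ ×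
        Matrix (Fin 3) (Fin 3) ℝ × Matrix (Fin 3) (Fin 3) ℝ ×
        Matrix (Fin 4) (Fin 4) ℝ) := by
  exact ⟨(MonoidAlgebra.domCongr ℝ ℝ GAux.equivG.symm).trans
    (AlgEquiv.ofBijective GAux.phi GAux.phi_bij)⟩
end
end
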